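/- arXiv:1504.06105 — 2 statements merged into one kernel-verified Lean document; each statement's English description precedes it below -/
import Mathlib

section
/- Let → be a type-invariant transition relation over a finite state set Q with initial states I ⊆ Q and final states F ⊆ Q. There exists an accepting run, i.e. an infinite run whose first configuration has a state in I and in which some state f ∈ F occurs in infinitely many configurations, if and only if there exist a state f ∈ F, n-tuples w̄, v̄ with typ_C(w̄) = typ_C(v̄), a finite run r₁ from a configuration with state in I to the configuration (f, v̄), and a noncontracting loop r₂ starting in the configuration (f, w̄). -/
/-!
The argument rests on *tree embeddings* `H` of the tree of all words (`Emb`). One that fixes the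
constants preserves types (`Emb.isInducedIso`), so it maps runs to runs (`Emb.map_step`).
Conversely, `w ≼* v` always comes from such an embedding with `H w = v` (`Stretch.exists_emb`): the
stretching condition leaves room to map the path between two consecutive nodes of the tree of `w`
into the path between their images, and side branches are mapped by strictly monotone maps on
letters.

*From an accepting run to a loop.* By Dickson's lemma `≼*` has a good pair in every infinite
sequence of tuples (`exists_stretch`). Applied to the positions with state `f`, this gives a loop
whose ends are related by `≼*`, and such a loop is noncontracting (`Stretch.not_contracting`).

*From a loop to an accepting run.* Let `h` be the isomorphism induced by a noncontracting loop from
`w` to `w'`. Inserting zeros along the words is a tree embedding (`pad`), and the amount can be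
chosen separately for each word. A node that is fixed by `h` has only fixed nodes below it, and for
a node `e` moved by `h` it suffices that the padding at `h e` outweighs all of the padded word `e`.
The latter can be achieved because there is a rank function for which `h e` has larger rank than
every prefix of `e` (`rank_lt`): nodes that are not moved to the left move upwards in the
lexicographic order, and everything above the image of a node moved to the left is again moved to
the left. Hence some padding `E` satisfies `E w ≼* E w'` (`exists_pad_stretch`), and an embedding
`H` with `H (E w) = E w'` unfolds the loop to an infinite run from `E w`
(`exists_infRun_of_loop`). Padding the run to `(f, v)` enough to get `E w ≼* K v`
(`exists_pad_above`) yields an embedding that moves the infinite run to one starting in `K v`, and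
the two runs are concatenated.
-/

namespace CLTL

/-- A word is a finite sequence of rationals. -/
abbrev Word := List ℚ

/-- Lexicographic order on lists over a linear order: `w ⊑ v` iff `w` is a prefix of `v`,
or they branch at some position with the letter of `w` smaller. -/
def lexLe {α : Type*} [LinearOrder α] (w v : List α) : Prop :=
  w <+: v ∨ ∃ (p : List α) (a b : α), a < b ∧ (p ++ [a]) <+: w ∧ (p ++ [b]) <+: v

/-- Longest common prefix of two lists. -/
def lcp {α : Type*} [DecidableEq α] : List α → List α → List α
  | a :: w, b :: v => if a = b then a :: lcp w v else []
  | _, _ => []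

/-- Iterated longest common prefix of a nonempty list of words. -/
def listLCP : List Word → Word
  | [] => []
  | [x] => x
  | x :: xs => lcp x (listLCP xs)

/-- Insertion of an `m`-gap at `u`. -/
def iota (u : Word) (m : ℕ) (w : Word) : Word :=
  if u <+: w then u ++ List.replicate m 0 ++ w.drop u.length else w

/-- The maximal common ancestor tree of a tuple `w` together with constants `C`:
`{ε}` together with all iterated longest common prefixes of nonempty subsets of entries. -/
def MCAT (C : List Word) {k : ℕ} (w : Fin k → Word) : Set Word :=
  insert [] { x | ∃ I : Finset (Fin (k + C.length)),
    I.Nonempty ∧ x = listLCP (I.toList.map (Fin.append w C.get)) }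

/-- `h` is the induced isomorphism witnessing `typ_C(w) = typ_C(v)`. -/
def IsInducedIso (C : List Word) {k : ℕ} (w v : Fin k → Word) (h : Word → Word) : Prop :=
  Set.BijOn h (MCAT C w) (MCAT C v) ∧
  (∀ x ∈ MCAT C w, ∀ y ∈ MCAT C w,
    (x <+: y ↔ h x <+: h y) ∧ (lexLe x y ↔ lexLe (h x) (h y))) ∧
  (∀ c ∈ C, h c = c) ∧
  (∀ i : Fin k, h (w i) = v i)

/-- `typ_C(w) = typ_C(v)`. -/
def SameTyp (C : List Word) {k : ℕ} (w v : Fin k → Word) : Prop :=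
  ∃ h : Word → Word, IsInducedIso C w v h

/-- The stretching condition on an isomorphism `h` of `MCAT_C(w)`:
`|h e| - |h d| ≥ |e| - |d|` whenever `d` is a proper prefix of `e`. -/
def StretchCond (C : List Word) {k : ℕ} (w : Fin k → Word) (h : Word → Word) : Prop :=
  ∀ d ∈ MCAT C w, ∀ e ∈ MCAT C w, d <+: e → d ≠ e →
    e.length + (h d).length ≤ (h e).length + d.length

/-- `w ≼* v` for tuples of words. -/
def Stretch (C : List Word) {k : ℕ} (w v : Fin k → Word) : Prop :=
  ∃ h : Word → Word, IsInducedIso C w v h ∧ StretchCond C w h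

/-- `≼*` on configurations. -/
def ConfigLe (C : List Word) {Q : Type*} {n : ℕ}
    (c d : Q × (Fin n → Word)) : Prop :=
  c.1 = d.1 ∧ Stretch C c.2 d.2

/-- A transition relation is type-invariant. -/
def TypeInvariant (C : List Word) {Q : Type*} {n : ℕ}
    (step : (Q × (Fin n → Word)) → (Q × (Fin n → Word)) → Prop) : Prop :=
  ∀ (q p : Q) (w v w' v' : Fin n → Word),
    step (q, w) (p, v) → SameTyp C (Fin.append w v) (Fin.append w' v') →
      step (q, w') (p, v')

/-- Finite runs, indexed by `Fin (N+1)`. -/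
def IsFinRun {Q : Type*} {n : ℕ}
    (step : (Q × (Fin n → Word)) → (Q × (Fin n → Word)) → Prop)
    {N : ℕ} (r : Fin (N + 1) → Q × (Fin n → Word)) : Prop :=
  ∀ i : Fin N, step (r i.castSucc) (r i.succ)

/-- Infinite runs. -/
def IsInfRun {Q : Type*} {n : ℕ}
    (step : (Q × (Fin n → Word)) → (Q × (Fin n → Word)) → Prop)
    (r : ℕ → Q × (Fin n → Word)) : Prop :=
  ∀ i : ℕ, step (r i) (r (i + 1))

/-- The pair `(w, v)` (of tuples of equal type) is contracting. -/
def ContractingPair (C : List Word) {k : ℕ} (w v : Fin k → Word) : Prop :=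
  ∃ h : Word → Word, IsInducedIso C w v h ∧
    ((∃ d ∈ MCAT C w, h d <+: d ∧ h d ≠ d) ∨
     (∃ d ∈ MCAT C w, ∃ e ∈ MCAT C w,
        d <+: e ∧ d ≠ e ∧ h e = e ∧ d <+: h d ∧ d ≠ h d))

/-- A set of words `T` has `n`-gaps above `B`. -/
def HasGaps (n : ℕ) (T B : Set Word) : Prop :=
  ∀ d ∈ T, ∀ e ∈ T, d <+: e → d ≠ e → (∀ b ∈ B, ¬ e <+: b) → n + d.length < e.length

/-! ### Words, branching and longest common prefixes -/

/-- The strict part of `lexLe` that is not the prefix order: `x` and `y` branch at some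
position, with the letter of `x` being the smaller one. -/
def Br (x y : Word) : Prop :=
  ∃ (p : Word) (a b : ℚ), a < b ∧ (p ++ [a]) <+: x ∧ (p ++ [b]) <+: y

theorem lexLe_iff (x y : Word) : lexLe x y ↔ x <+: y ∨ Br x y := Iff.rfl

theorem prefix_antisymm {x y : Word} (h : x <+: y) (h' : y <+: x) : x = y :=
  h.eq_of_length_le h'.length_le

theorem exists_letter {p x : Word} (h : p <+: x) (hne : p ≠ x) : ∃ a, (p ++ [a]) <+: x := by
  obtain ⟨t, rfl⟩ := h
  cases t with
  | nil => simp at hne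
  | cons a t => exact ⟨a, t, by simp⟩

theorem letter_unique {p x : Word} {a b : ℚ} (h : (p ++ [a]) <+: x) (h' : (p ++ [b]) <+: x) :
    a = b := by
  obtain ⟨t, rfl⟩ := h
  rw [List.append_assoc, List.prefix_append_right_inj] at h'
  exact ((List.cons_prefix_cons.1 h').1).symm

theorem prefix_of_snoc {p x : Word} {a : ℚ} (h : (p ++ [a]) <+: x) : p <+: x :=
  (List.prefix_append p [a]).trans h

theorem ne_of_snoc {p x : Word} {a : ℚ} (h : (p ++ [a]) <+: x) : p ≠ x := by
  rintro rfl
  simpa using h.length_le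

theorem Br.mono {x y x' y' : Word} (h : Br x y) (hx : x <+: x') (hy : y <+: y') : Br x' y' := by
  obtain ⟨p, a, b, hab, h1, h2⟩ := h
  exact ⟨p, a, b, hab, h1.trans hx, h2.trans hy⟩

/-- Two prefixes of a common word do not branch. -/
theorem Br.elim {x y z : Word} (h : Br x y) (hx : x <+: z) (hy : y <+: z) : False := by
  obtain ⟨p, a, b, hab, h1, h2⟩ := h
  exact hab.ne (letter_unique (h1.trans hx) (h2.trans hy))

theorem Br.not_prefix {x y : Word} (h : Br x y) : ¬ x <+: y := fun h' => h.elim h' List.prefix_rfl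

theorem Br.not_prefix' {x y : Word} (h : Br x y) : ¬ y <+: x := fun h' => h.elim List.prefix_rfl h'

theorem br_cons {x y : Word} (c : ℚ) (h : Br x y) : Br (c :: x) (c :: y) := by
  obtain ⟨p, a, b, hab, h1, h2⟩ := h
  exact ⟨c :: p, a, b, hab, by simpa using h1, by simpa using h2⟩

theorem trichotomy : ∀ x y : Word, x <+: y ∨ y <+: x ∨ Br x y ∨ Br y x
  | [], y => Or.inl (List.nil_prefix)
  | x, [] => Or.inr (Or.inl List.nil_prefix)
  | a :: x, b :: y => by
    rcases lt_trichotomy a b with h | rfl | h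
    · exact Or.inr (Or.inr (Or.inl ⟨[], a, b, h, by simp, by simp⟩))
    · rcases trichotomy x y with h | h | h | h
      · exact Or.inl (by simpa using h)
      · exact Or.inr (Or.inl (by simpa using h))
      · exact Or.inr (Or.inr (Or.inl (br_cons a h)))
      · exact Or.inr (Or.inr (Or.inr (br_cons a h)))
    · exact Or.inr (Or.inr (Or.inr ⟨[], b, a, h, by simp, by simp⟩))

theorem Br.lt {x y : Word} (h : Br x y) : x < y := by
  obtain ⟨p, a, b, hab, ⟨s, rfl⟩, ⟨t, rfl⟩⟩ := h
  induction p with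
  | nil => simpa [List.cons_lt_cons_iff] using Or.inl hab
  | cons c p ih => simpa [List.cons_lt_cons_iff] using ih

theorem lt_of_prefix {x y : Word} (h : x <+: y) (hne : x ≠ y) : x < y := by
  obtain ⟨t, rfl⟩ := h
  induction x with
  | nil =>
    cases t with
    | nil => simp at hne
    | cons a t => simp
  | cons c p ih => simpa [List.cons_lt_cons_iff] using ih (by simpa using hne)

theorem le_of_prefix {x y : Word} (h : x <+: y) : x ≤ y := by
  by_cases hne : x = y
  · exact hne.le
  · exact (lt_of_prefix h hne).le

theorem br_iff (x y : Word) : Br x y ↔ lexLe x y ∧ ¬ x <+: y := by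
  rw [lexLe_iff]
  exact ⟨fun h => ⟨Or.inr h, h.not_prefix⟩, fun h => h.1.resolve_left h.2⟩

theorem prefix_lcp_iff : ∀ z x y : Word, z <+: lcp x y ↔ z <+: x ∧ z <+: y
  | z, [], y => by
    simp only [lcp, List.prefix_nil]
    exact ⟨fun h => by simp [h], fun h => h.1⟩
  | z, a :: x, [] => by
    simp only [lcp, List.prefix_nil]
    exact ⟨fun h => by simp [h], fun h => h.2⟩
  | [], a :: x, b :: y => by simp
  | c :: z, a :: x, b :: y => by
    simp only [lcp]
    split_ifs with h
    · subst h
      simp only [List.cons_prefix_cons, prefix_lcp_iff z x y]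
      tauto
    · simp only [List.prefix_nil, List.cons_prefix_cons]
      constructor
      · intro h; simp at h
      · rintro ⟨⟨rfl, -⟩, rfl, -⟩; exact absurd rfl h

theorem eq_of_prefix_iff {x y : Word} (h : ∀ z, z <+: x ↔ z <+: y) : x = y :=
  prefix_antisymm ((h x).1 List.prefix_rfl) ((h y).2 List.prefix_rfl)

theorem lcp_left (x y : Word) : lcp x y <+: x := ((prefix_lcp_iff _ x y).1 List.prefix_rfl).1

theorem lcp_right (x y : Word) : lcp x y <+: y := ((prefix_lcp_iff _ x y).1 List.prefix_rfl).2

theorem lcp_eq_left {x y : Word} (h : x <+: y) : lcp x y = x :=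
  prefix_antisymm (lcp_left x y) ((prefix_lcp_iff _ _ _).2 ⟨List.prefix_rfl, h⟩)

theorem lcp_comm (x y : Word) : lcp x y = lcp y x :=
  eq_of_prefix_iff fun z => by rw [prefix_lcp_iff, prefix_lcp_iff, and_comm]

theorem lcp_eq_of_branch {p x y : Word} {a b : ℚ} (hab : a ≠ b) (hx : (p ++ [a]) <+: x)
    (hy : (p ++ [b]) <+: y) : lcp x y = p := by
  have h : p <+: lcp x y := (prefix_lcp_iff _ _ _).2 ⟨prefix_of_snoc hx, prefix_of_snoc hy⟩
  by_contra hne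
  obtain ⟨c, hc⟩ := exists_letter h (Ne.symm hne)
  exact hab ((letter_unique hx (hc.trans (lcp_left x y))).trans
    (letter_unique hy (hc.trans (lcp_right x y))).symm)

theorem listLCP_cons_cons (x y : Word) (l : List Word) :
    listLCP (x :: y :: l) = lcp x (listLCP (y :: l)) := rfl

theorem prefix_listLCP_iff (z : Word) : ∀ l : List Word, l ≠ [] →
    (z <+: listLCP l ↔ ∀ x ∈ l, z <+: x)
  | [], h => absurd rfl h
  | [x], _ => by simp [listLCP]
  | x :: y :: l, _ => by
    rw [listLCP_cons_cons, prefix_lcp_iff, prefix_listLCP_iff z (y :: l) (by simp)]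
    simp

/-! ### The maximal common ancestor tree -/

/-- The node of `MCAT C w` named by the index set `I`; the empty index set names `ε`. -/
noncomputable def node (C : List Word) {k : ℕ} (w : Fin k → Word)
    (I : Finset (Fin (k + C.length))) : Word :=
  listLCP (I.toList.map (Fin.append w C.get))

theorem node_empty (C : List Word) {k : ℕ} (w : Fin k → Word) : node C w ∅ = [] := by
  simp [node, listLCP]

theorem mem_MCAT {C : List Word} {k : ℕ} {w : Fin k → Word} {x : Word} :
    x ∈ MCAT C w ↔ ∃ I, x = node C w I := by
  constructor
  · rintro (rfl | ⟨I, -, rfl⟩)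
    · exact ⟨∅, (node_empty C w).symm⟩
    · exact ⟨I, rfl⟩
  · rintro ⟨I, rfl⟩
    rcases I.eq_empty_or_nonempty with rfl | h
    · exact Or.inl (node_empty C w)
    · exact Or.inr ⟨I, h, rfl⟩

theorem prefix_node_iff {C : List Word} {k : ℕ} {w : Fin k → Word}
    {I : Finset (Fin (k + C.length))} (hI : I.Nonempty) (z : Word) :
    z <+: node C w I ↔ ∀ i ∈ I, z <+: Fin.append w C.get i := by
  rw [node, prefix_listLCP_iff]
  · simp
  · simpa using hI.ne_empty

theorem node_singleton (C : List Word) {k : ℕ} (w : Fin k → Word) (i : Fin (k + C.length)) :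
    node C w {i} = Fin.append w C.get i := by
  simp [node, listLCP]

theorem node_insert {C : List Word} {k : ℕ} (w : Fin k → Word) {i : Fin (k + C.length)}
    {I : Finset (Fin (k + C.length))} (hI : I.Nonempty) :
    node C w (insert i I) = lcp (Fin.append w C.get i) (node C w I) :=
  eq_of_prefix_iff fun z => by
    rw [prefix_lcp_iff, prefix_node_iff hI, prefix_node_iff (Finset.insert_nonempty i I)]
    simp

theorem nil_mem_MCAT {C : List Word} {k : ℕ} {w : Fin k → Word} : [] ∈ MCAT C w := Or.inl rfl

theorem append_mem_MCAT {C : List Word} {k : ℕ} (w : Fin k → Word) (i : Fin (k + C.length)) :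
    Fin.append w C.get i ∈ MCAT C w := mem_MCAT.2 ⟨{i}, (node_singleton C w i).symm⟩

theorem entry_mem_MCAT {C : List Word} {k : ℕ} (w : Fin k → Word) (i : Fin k) :
    w i ∈ MCAT C w := by
  simpa using append_mem_MCAT (C := C) w (Fin.castAdd _ i)

theorem const_mem_MCAT {C : List Word} {k : ℕ} (w : Fin k → Word) {c : Word} (hc : c ∈ C) :
    c ∈ MCAT C w := by
  obtain ⟨j, rfl⟩ := List.mem_iff_get.1 hc
  simpa using append_mem_MCAT (C := C) w (Fin.natAdd _ j)

theorem lcp_mem_MCAT {C : List Word} {k : ℕ} {w : Fin k → Word} {x y : Word}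
    (hx : x ∈ MCAT C w) (hy : y ∈ MCAT C w) : lcp x y ∈ MCAT C w := by
  obtain ⟨I, rfl⟩ := mem_MCAT.1 hx
  obtain ⟨J, rfl⟩ := mem_MCAT.1 hy
  rcases I.eq_empty_or_nonempty with rfl | hI
  · rw [node_empty, lcp_eq_left List.nil_prefix]; exact nil_mem_MCAT
  rcases J.eq_empty_or_nonempty with rfl | hJ
  · rw [node_empty, lcp_comm, lcp_eq_left List.nil_prefix]; exact nil_mem_MCAT
  refine mem_MCAT.2 ⟨I ∪ J, eq_of_prefix_iff fun z => ?_⟩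
  rw [prefix_lcp_iff, prefix_node_iff hI, prefix_node_iff hJ,
    prefix_node_iff (hI.mono Finset.subset_union_left)]
  simp only [Finset.mem_union, or_imp, forall_and]

theorem finite_MCAT (C : List Word) {k : ℕ} (w : Fin k → Word) : (MCAT C w).Finite := by
  refine (Set.finite_range (node C w)).subset fun x hx => ?_
  obtain ⟨I, rfl⟩ := mem_MCAT.1 hx
  exact ⟨I, rfl⟩

/-! ### Induced isomorphisms -/

section Iso

variable {C : List Word} {k : ℕ} {w v u : Fin k → Word} {h : Word → Word}

theorem IsInducedIso.mem (hh : IsInducedIso C w v h) {x : Word} (hx : x ∈ MCAT C w) :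
    h x ∈ MCAT C v := hh.1.mapsTo hx

theorem IsInducedIso.prefix_iff (hh : IsInducedIso C w v h) {x y : Word} (hx : x ∈ MCAT C w)
    (hy : y ∈ MCAT C w) : h x <+: h y ↔ x <+: y := (hh.2.1 x hx y hy).1.symm

theorem IsInducedIso.br_iff (hh : IsInducedIso C w v h) {x y : Word} (hx : x ∈ MCAT C w)
    (hy : y ∈ MCAT C w) : Br (h x) (h y) ↔ Br x y := by
  rw [CLTL.br_iff, CLTL.br_iff, hh.prefix_iff hx hy, (hh.2.1 x hx y hy).2]

theorem IsInducedIso.nil (hh : IsInducedIso C w v h) : h [] = [] := by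
  obtain ⟨x, hx, hx'⟩ := hh.1.surjOn (nil_mem_MCAT : [] ∈ MCAT C v)
  have := (hh.prefix_iff nil_mem_MCAT hx).2 List.nil_prefix
  rw [hx'] at this
  simpa using this

theorem IsInducedIso.lcp (hh : IsInducedIso C w v h) {x y : Word} (hx : x ∈ MCAT C w)
    (hy : y ∈ MCAT C w) : h (lcp x y) = CLTL.lcp (h x) (h y) := by
  have hm := lcp_mem_MCAT hx hy
  refine prefix_antisymm ((prefix_lcp_iff _ _ _).2
    ⟨(hh.prefix_iff hm hx).2 (lcp_left x y), (hh.prefix_iff hm hy).2 (lcp_right x y)⟩) ?_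
  obtain ⟨z, hz, hz'⟩ := hh.1.surjOn (lcp_mem_MCAT (hh.mem hx) (hh.mem hy))
  rw [← hz', hh.prefix_iff hz hm, prefix_lcp_iff, ← hh.prefix_iff hz hx, ← hh.prefix_iff hz hy,
    hz']
  exact ⟨lcp_left _ _, lcp_right _ _⟩

theorem IsInducedIso.append (hh : IsInducedIso C w v h) (i : Fin (k + C.length)) :
    h (Fin.append w C.get i) = Fin.append v C.get i := by
  refine Fin.addCases (fun i => ?_) (fun j => ?_) i
  · simpa using hh.2.2.2 i
  · simpa using hh.2.2.1 _ (List.get_mem C j)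

theorem IsInducedIso.node (hh : IsInducedIso C w v h) (I : Finset (Fin (k + C.length))) :
    h (node C w I) = CLTL.node C v I := by
  induction I using Finset.induction_on with
  | empty => rw [node_empty, node_empty, hh.nil]
  | insert i I hi ih =>
    rcases I.eq_empty_or_nonempty with rfl | hI
    · simpa [node_singleton] using hh.append i
    · rw [node_insert w hI, node_insert v hI, ← ih, ← hh.append i,
        hh.lcp (append_mem_MCAT w i) (mem_MCAT.2 ⟨I, rfl⟩)]

/-- The induced isomorphism is unique on the tree. -/
theorem IsInducedIso.eq (hh : IsInducedIso C w v h) {h' : Word → Word}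
    (hh' : IsInducedIso C w v h') {x : Word} (hx : x ∈ MCAT C w) : h x = h' x := by
  obtain ⟨I, rfl⟩ := mem_MCAT.1 hx
  rw [hh.node, hh'.node]

theorem isInducedIso_id : IsInducedIso C w w id :=
  ⟨Set.bijOn_id _, fun _ _ _ _ => ⟨Iff.rfl, Iff.rfl⟩, fun _ _ => rfl, fun _ => rfl⟩

theorem IsInducedIso.trans (hh : IsInducedIso C w v h) {g : Word → Word}
    (hg : IsInducedIso C v u g) : IsInducedIso C w u (g ∘ h) :=
  ⟨hg.1.comp hh.1, fun x hx y hy =>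
    ⟨(hh.2.1 x hx y hy).1.trans (hg.2.1 _ (hh.mem hx) _ (hh.mem hy)).1,
      (hh.2.1 x hx y hy).2.trans (hg.2.1 _ (hh.mem hx) _ (hh.mem hy)).2⟩,
    fun c hc => by simp [hh.2.2.1 c hc, hg.2.2.1 c hc],
    fun i => by simp [hh.2.2.2 i, hg.2.2.2 i]⟩

theorem IsInducedIso.symm (hh : IsInducedIso C w v h) :
    IsInducedIso C v w (Function.invFunOn h (MCAT C w)) := by
  have hinv : ∀ x ∈ MCAT C w, Function.invFunOn h (MCAT C w) (h x) = x :=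
    fun x hx => hh.1.injOn.leftInvOn_invFunOn hx
  refine ⟨hh.1.invOn_invFunOn.symm.bijOn hh.1.surjOn.mapsTo_invFunOn hh.1.mapsTo, ?_, ?_, ?_⟩
  · intro x hx y hy
    obtain ⟨x', hx', rfl⟩ := hh.1.surjOn hx
    obtain ⟨y', hy', rfl⟩ := hh.1.surjOn hy
    rw [hinv x' hx', hinv y' hy']
    exact ⟨(hh.2.1 x' hx' y' hy').1.symm, (hh.2.1 x' hx' y' hy').2.symm⟩
  · intro c hc
    have := hinv c (const_mem_MCAT w hc)
    rwa [hh.2.2.1 c hc] at this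
  · intro i
    have := hinv (w i) (entry_mem_MCAT w i)
    rwa [hh.2.2.2 i] at this

end Iso

/-! ### Tree embeddings -/

/-- A tree embedding of the tree of words: it fixes the root, and extending `p` by letters
`a < b` leads to images that leave `H p` through letters `a' < b'`. Such a map preserves and
reflects the prefix order, the lexicographic order and longest common prefixes. -/
structure Emb (H : Word → Word) : Prop where
  nil : H [] = []
  step : ∀ p a b, a < b → ∃ a' b', a' < b' ∧ (H p ++ [a']) <+: H (p ++ [a]) ∧
    (H p ++ [b']) <+: H (p ++ [b])

section Emb

variable {H : Word → Word}

theorem Emb.letter (hH : Emb H) (p : Word) (a : ℚ) : ∃ a', (H p ++ [a']) <+: H (p ++ [a]) := by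
  obtain ⟨a', b', -, h, -⟩ := hH.step p a (a + 1) (by linarith)
  exact ⟨a', h⟩

theorem Emb.mono (hH : Emb H) {x y : Word} (h : x <+: y) : H x <+: H y := by
  obtain ⟨t, rfl⟩ := h
  induction t using List.reverseRecOn with
  | nil => simp
  | append_singleton t a ih =>
    obtain ⟨a', ha⟩ := hH.letter (x ++ t) a
    rw [← List.append_assoc]
    exact ih.trans (prefix_of_snoc ha)

theorem Emb.ne (hH : Emb H) {x y : Word} (h : x <+: y) (hne : x ≠ y) : H x ≠ H y := by
  obtain ⟨a, ha⟩ := exists_letter h hne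
  obtain ⟨a', ha'⟩ := hH.letter x a
  exact ne_of_snoc (ha'.trans (hH.mono ha))

theorem Emb.br (hH : Emb H) {x y : Word} (h : Br x y) : Br (H x) (H y) := by
  obtain ⟨p, a, b, hab, h1, h2⟩ := h
  obtain ⟨a', b', hab', h3, h4⟩ := hH.step p a b hab
  exact ⟨H p, a', b', hab', h3.trans (hH.mono h1), h4.trans (hH.mono h2)⟩

theorem Emb.prefix_iff (hH : Emb H) {x y : Word} : H x <+: H y ↔ x <+: y := by
  refine ⟨fun h => ?_, hH.mono⟩
  rcases trichotomy x y with h' | h' | h' | h'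
  · exact h'
  · by_cases hne : y = x
    · exact hne ▸ List.prefix_rfl
    · exact absurd (prefix_antisymm (hH.mono h') h) (hH.ne h' hne)
  · exact absurd h (hH.br h').not_prefix
  · exact absurd h (hH.br h').not_prefix'

theorem Emb.injective (hH : Emb H) : Function.Injective H := fun _ _ h =>
  prefix_antisymm (hH.prefix_iff.1 (h ▸ List.prefix_rfl)) (hH.prefix_iff.1 (h ▸ List.prefix_rfl))

theorem Emb.lexLe_iff (hH : Emb H) {x y : Word} : lexLe (H x) (H y) ↔ lexLe x y := by
  rw [CLTL.lexLe_iff, CLTL.lexLe_iff, hH.prefix_iff]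
  refine ⟨fun h => h.imp_right fun h => ?_, fun h => h.imp_right hH.br⟩
  rcases trichotomy x y with h' | h' | h' | h'
  · exact absurd (hH.mono h') h.not_prefix
  · exact absurd (hH.mono h') h.not_prefix'
  · exact h'
  · exact absurd (h.lt.trans (hH.br h').lt) (lt_irrefl _)

theorem Emb.lcp (hH : Emb H) (x y : Word) : H (lcp x y) = CLTL.lcp (H x) (H y) := by
  rcases trichotomy x y with h | h | h | h
  · rw [lcp_eq_left h, lcp_eq_left (hH.mono h)]
  · rw [lcp_comm, lcp_eq_left h, lcp_comm, lcp_eq_left (hH.mono h)]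
  · obtain ⟨p, a, b, hab, h1, h2⟩ := h
    obtain ⟨a', b', hab', h3, h4⟩ := hH.step p a b hab
    rw [lcp_eq_of_branch hab.ne h1 h2,
      lcp_eq_of_branch hab'.ne (h3.trans (hH.mono h1)) (h4.trans (hH.mono h2))]
  · obtain ⟨p, a, b, hab, h1, h2⟩ := h
    obtain ⟨a', b', hab', h3, h4⟩ := hH.step p a b hab
    rw [lcp_comm, lcp_comm (H x), lcp_eq_of_branch hab.ne h1 h2,
      lcp_eq_of_branch hab'.ne (h3.trans (hH.mono h1)) (h4.trans (hH.mono h2))]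

theorem emb_id : Emb id := ⟨rfl, fun _ a b hab => ⟨a, b, hab, List.prefix_rfl, List.prefix_rfl⟩⟩

theorem Emb.comp {G : Word → Word} (hG : Emb G) (hH : Emb H) : Emb (G ∘ H) := by
  refine ⟨by simp [hH.nil, hG.nil], fun p a b hab => ?_⟩
  obtain ⟨a', b', hab', h1, h2⟩ := hH.step p a b hab
  obtain ⟨a'', b'', hab'', h3, h4⟩ := hG.step (H p) a' b' hab'
  exact ⟨a'', b'', hab'', h3.trans (hG.mono h1), h4.trans (hG.mono h2)⟩

variable {C : List Word}

theorem Emb.append (hC : ∀ c ∈ C, H c = c) {k : ℕ} (w : Fin k → Word)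
    (i : Fin (k + C.length)) :
    Fin.append (H ∘ w) C.get i = H (Fin.append w C.get i) := by
  refine Fin.addCases (fun i => ?_) (fun j => ?_) i
  · simp
  · simpa using (hC _ (List.get_mem C j)).symm

theorem Emb.node (hH : Emb H) (hC : ∀ c ∈ C, H c = c) {k : ℕ} (w : Fin k → Word)
    (I : Finset (Fin (k + C.length))) : node C (H ∘ w) I = H (CLTL.node C w I) := by
  induction I using Finset.induction_on with
  | empty => rw [node_empty, node_empty, hH.nil]
  | insert i I hi ih =>
    rcases I.eq_empty_or_nonempty with rfl | hI
    · simpa [node_singleton] using Emb.append hC w i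
    · rw [node_insert w hI, node_insert _ hI, ih, Emb.append hC w i, hH.lcp]

/-- A tree embedding that fixes the constants preserves types. -/
theorem Emb.isInducedIso (hH : Emb H) (hC : ∀ c ∈ C, H c = c) {k : ℕ} (w : Fin k → Word) :
    IsInducedIso C w (H ∘ w) H := by
  refine ⟨⟨?_, hH.injective.injOn, ?_⟩, fun x _ y _ => ⟨hH.prefix_iff.symm, hH.lexLe_iff.symm⟩,
    hC, fun i => rfl⟩
  · intro x hx
    obtain ⟨I, rfl⟩ := mem_MCAT.1 hx
    exact mem_MCAT.2 ⟨I, (hH.node hC w I).symm⟩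
  · intro x hx
    obtain ⟨I, rfl⟩ := mem_MCAT.1 hx
    exact ⟨CLTL.node C w I, mem_MCAT.2 ⟨I, rfl⟩, (hH.node hC w I).symm⟩

theorem Emb.map_step (hH : Emb H) (hC : ∀ c ∈ C, H c = c) {Q : Type*} {n : ℕ}
    {step : (Q × (Fin n → Word)) → (Q × (Fin n → Word)) → Prop} (hstep : TypeInvariant C step)
    {c d : Q × (Fin n → Word)} (h : step c d) : step (c.1, H ∘ c.2) (d.1, H ∘ d.2) := by
  refine hstep c.1 d.1 c.2 d.2 _ _ h ⟨H, ?_⟩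
  have := hH.isInducedIso hC (Fin.append c.2 d.2)
  have he : H ∘ Fin.append c.2 d.2 = Fin.append (H ∘ c.2) (H ∘ d.2) := by
    funext i
    refine Fin.addCases (fun i => ?_) (fun j => ?_) i
    · simp
    · simp only [Function.comp_apply, Fin.append_right]
  rwa [he] at this

end Emb

/-! ### Extending a stretching isomorphism to a tree embedding -/

/-- A strictly monotone map on a finite set of rationals extends to all of `ℚ`. -/
theorem exists_strictMono_extension (S : Finset ℚ) (f : ℚ → ℚ) (hf : StrictMonoOn f S) :
    ∃ φ : ℚ → ℚ, StrictMono φ ∧ ∀ s ∈ S, φ s = f s := by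
  induction S using Finset.induction_on_max with
  | empty => exact ⟨id, strictMono_id, by simp⟩
  | insert m S hm ih =>
    obtain ⟨φ, hφ, hφf⟩ := ih (hf.mono (by simp))
    rcases S.eq_empty_or_nonempty with rfl | hS
    · exact ⟨fun x => x + (f m - m), fun x y h => by simpa using h, by simp⟩
    -- Keep `φ` up to the largest old point `s`, and continue linearly through `(m, f m)`.
    set s := S.max' hS with hs
    have hsS : s ∈ S := S.max'_mem hS
    have hsm : s < m := hm s hsS
    have hfsm : f s < f m := hf (by simp [hsS]) (by simp) hsm
    set r := (f m - f s) / (m - s) with hr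
    have hr0 : 0 < r := div_pos (by linarith) (by linarith)
    refine ⟨fun x => if x ≤ s then φ x else f s + (x - s) * r, ?_, ?_⟩
    · intro x y hxy
      dsimp only
      split_ifs with h1 h2 h2
      · exact hφ hxy
      · have : φ x ≤ f s := hφf s hsS ▸ hφ.monotone h1
        have : 0 < (y - s) * r := mul_pos (by linarith) hr0
        linarith
      · linarith
      · have := mul_lt_mul_of_pos_right (show x - s < y - s by linarith) hr0
        linarith
    · intro t ht
      dsimp only
      rcases Finset.mem_insert.1 ht with rfl | ht
      · rw [if_neg (not_le.2 hsm), hr, mul_div_cancel₀ _ (by linarith)]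
        ring
      · rw [if_pos (hs ▸ S.le_max' t ht), hφf t ht]

/-- Recursion on words by appending letters: the value at `acc ++ (w ++ [a])` is computed by
`F` from the word `acc ++ w`, the value there, and the letter `a`; `cur` is the value at
`acc`. -/
def snocRec (F : Word → Word → ℚ → Word) : Word → Word → Word → Word
  | _, cur, [] => cur
  | acc, cur, a :: w => snocRec F (acc ++ [a]) (F acc cur a) w

theorem snocRec_snoc (F : Word → Word → ℚ → Word) (w : Word) (a : ℚ) : ∀ acc cur : Word,
    snocRec F acc cur (w ++ [a]) = F (acc ++ w) (snocRec F acc cur w) a := by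
  induction w with
  | nil => intro acc cur; simp [snocRec]
  | cons b w ih => intro acc cur; simp [snocRec, ih]

section Extension

variable {C : List Word} {k : ℕ} {w v : Fin k → Word} {h : Word → Word}

/-- Every word below some node has a least node above it. -/
theorem exists_least {p t : Word} (ht : t ∈ MCAT C w) (hpt : p <+: t) :
    ∃ e ∈ MCAT C w, p <+: e ∧ ∀ t ∈ MCAT C w, p <+: t → e <+: t := by
  have hex : ∃ m, ∃ e ∈ MCAT C w, p <+: e ∧ e.length = m := ⟨_, t, ht, hpt, rfl⟩
  classical
  obtain ⟨e, he, hpe, hlen⟩ := Nat.find_spec hex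
  refine ⟨e, he, hpe, fun s hs hps => ?_⟩
  have h1 : Nat.find hex ≤ (lcp e s).length :=
    Nat.find_min' hex ⟨_, lcp_mem_MCAT he hs, (prefix_lcp_iff _ _ _).2 ⟨hpe, hps⟩, rfl⟩
  have := (lcp_left e s).eq_of_length_le (by omega)
  rw [← this]
  exact lcp_right e s

theorem IsInducedIso.length_le (hh : IsInducedIso C w v h) (hs : StretchCond C w h) {e : Word}
    (he : e ∈ MCAT C w) : e.length ≤ (h e).length := by
  by_cases hne : [] = e
  · simp [← hne]
  · have := hs [] nil_mem_MCAT e he List.nil_prefix hne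
    simpa [hh.nil] using this

/-- The value of the extension of `h` at a word `p` below the tree: if `e` is the least node above
`p`, the last `|e| - |p|` letters are removed from `h e`. -/
def IsVal (C : List Word) {k : ℕ} (w : Fin k → Word) (h : Word → Word) (p x : Word) : Prop :=
  ∃ e ∈ MCAT C w, p <+: e ∧ (∀ t ∈ MCAT C w, p <+: t → e <+: t) ∧
    x <+: h e ∧ x.length + e.length = (h e).length + p.length

theorem exists_isVal (hh : IsInducedIso C w v h) (hs : StretchCond C w h) {p t : Word}
    (ht : t ∈ MCAT C w) (hpt : p <+: t) : ∃ x, IsVal C w h p x := by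
  obtain ⟨e, he, hpe, hmin⟩ := exists_least ht hpt
  refine ⟨(h e).take ((h e).length + p.length - e.length), e, he, hpe, hmin,
    List.take_prefix _ _, ?_⟩
  have := hh.length_le hs he
  have := hpe.length_le
  rw [List.length_take]
  omega

theorem isVal_node {p x : Word} (hp : p ∈ MCAT C w) (hx : IsVal C w h p x) : x = h p := by
  obtain ⟨e, he, hpe, hmin, hxe, hlen⟩ := hx
  obtain rfl := prefix_antisymm hpe (hmin p hp List.prefix_rfl)
  exact hxe.eq_of_length (by omega)

/-- One more letter below the tree makes the value strictly longer. -/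
theorem isVal_letter (hh : IsInducedIso C w v h) (hs : StretchCond C w h) {p x y : Word} {b : ℚ}
    (hx : IsVal C w h p x) (hy : IsVal C w h (p ++ [b]) y) : ∃ b', (x ++ [b']) <+: y := by
  obtain ⟨e', he', hpe', hmin', hye, hlen'⟩ := hy
  suffices hlt : x <+: h e' ∧ x.length < y.length by
    refine exists_letter (List.prefix_of_prefix_length_le hlt.1 hye hlt.2.le) ?_
    rintro rfl
    exact lt_irrefl _ hlt.2
  by_cases hp : p ∈ MCAT C w
  · obtain rfl := isVal_node hp hx
    have h1 := prefix_of_snoc hpe'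
    refine ⟨(hh.prefix_iff hp he').2 h1, ?_⟩
    have := hs p hp e' he' h1 (ne_of_snoc hpe')
    simp at hlen'
    omega
  · obtain ⟨e, he, hpe, hmin, hxe, hlen⟩ := hx
    -- `p` is not a node, so its only continuation below the tree leads to `e`.
    obtain ⟨c, hc⟩ := exists_letter hpe (fun hpe => hp (hpe ▸ he))
    have hee' := hmin e' he' (prefix_of_snoc hpe')
    obtain rfl := letter_unique (hc.trans hee') hpe'
    obtain rfl := prefix_antisymm hee' (hmin' e he hc)
    simp at hlen'
    exact ⟨hxe, by omega⟩

theorem isVal_lt (hh : IsInducedIso C w v h) {p x y z : Word}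
    {a b a' b' : ℚ} (hx : IsVal C w h p x) (hy : IsVal C w h (p ++ [a]) y)
    (hz : IsVal C w h (p ++ [b]) z) (hab : a < b) (ha : (x ++ [a']) <+: y)
    (hb : (x ++ [b']) <+: z) : a' < b' := by
  obtain ⟨e, he, hpe, -, hye, -⟩ := hy
  obtain ⟨e', he', hpe', -, hze, -⟩ := hz
  have hl := lcp_eq_of_branch hab.ne hpe hpe'
  have hp : p ∈ MCAT C w := hl ▸ lcp_mem_MCAT he he'
  obtain rfl := isVal_node hp hx
  obtain ⟨q, c, d, hcd, h1, h2⟩ := (hh.br_iff he he').2 ⟨p, a, b, hab, hpe, hpe'⟩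
  obtain rfl : h p = q := by
    rw [← lcp_eq_of_branch hcd.ne h1 h2, ← hh.lcp he he', hl]
  rwa [letter_unique (ha.trans hye) h1, letter_unique (hb.trans hze) h2]

/-- The branching letters at a word below the tree can be mapped by one strictly monotone map. -/
theorem exists_letterMap (hh : IsInducedIso C w v h) (hs : StretchCond C w h) {p x : Word}
    (hx : IsVal C w h p x) : ∃ φ : ℚ → ℚ, StrictMono φ ∧
      ∀ b y, IsVal C w h (p ++ [b]) y → (x ++ [φ b]) <+: y := by
  classical
  have hfin : {b : ℚ | ∃ t ∈ MCAT C w, (p ++ [b]) <+: t}.Finite := by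
    refine ((finite_MCAT C w).image fun t => t.getD p.length 0).subset ?_
    rintro b ⟨t, ht, s, hs⟩
    exact ⟨t, ht, by simp [← hs]⟩
  have hval : ∀ b : ℚ, ∃ b' : ℚ, ∀ y, IsVal C w h (p ++ [b]) y → (x ++ [b']) <+: y := by
    intro b
    by_cases hb : ∃ y, IsVal C w h (p ++ [b]) y
    · obtain ⟨y, hy⟩ := hb
      obtain ⟨b', hb'⟩ := isVal_letter hh hs hx hy
      refine ⟨b', fun z hz => ?_⟩
      obtain ⟨e, he, hpe, hmin, hye, hlen⟩ := hy
      obtain ⟨e', he', hpe', hmin', hze, hlen'⟩ := hz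
      obtain rfl := prefix_antisymm (hmin e' he' hpe') (hmin' e he hpe)
      have hyz : y.length = z.length := by omega
      rwa [← (List.prefix_of_prefix_length_le hye hze hyz.le).eq_of_length hyz]
    · exact ⟨0, fun y hy => absurd ⟨y, hy⟩ hb⟩
  choose f hf using hval
  obtain ⟨φ, hφ, hφf⟩ := exists_strictMono_extension hfin.toFinset f (by
    intro a ha b hb hab
    simp only [Set.Finite.coe_toFinset, Set.mem_ofPred_eq] at ha hb
    obtain ⟨t, ht, hpt⟩ := ha
    obtain ⟨s, hs', hps⟩ := hb
    obtain ⟨y, hy⟩ := exists_isVal hh hs ht hpt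
    obtain ⟨z, hz⟩ := exists_isVal hh hs hs' hps
    exact isVal_lt hh hx hy hz hab (hf a y hy) (hf b z hz))
  refine ⟨φ, hφ, fun b y hy => ?_⟩
  rw [hφf b]
  · exact hf b y hy
  · obtain ⟨e, he, hpe, -⟩ := hy
    simpa using ⟨e, he, hpe⟩

/-- A stretching isomorphism of trees extends to a tree embedding on all words. -/
theorem exists_extension (hh : IsInducedIso C w v h) (hs : StretchCond C w h) :
    ∃ H : Word → Word, Emb H ∧ ∀ x ∈ MCAT C w, H x = h x := by
  classical
  -- A value and a letter map for every word, prescribed only for words below the tree.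
  have hV : ∀ p, ∃ x, (∃ t ∈ MCAT C w, p <+: t) → IsVal C w h p x := by
    intro p
    by_cases hp : ∃ t ∈ MCAT C w, p <+: t
    · obtain ⟨t, ht, hpt⟩ := hp
      obtain ⟨x, hx⟩ := exists_isVal hh hs ht hpt
      exact ⟨x, fun _ => hx⟩
    · exact ⟨[], fun h => absurd h hp⟩
  choose V hV using hV
  have hφ : ∀ p, ∃ φ : ℚ → ℚ, StrictMono φ ∧ ((∃ t ∈ MCAT C w, p <+: t) →
      ∀ b y, IsVal C w h (p ++ [b]) y → (V p ++ [φ b]) <+: y) := by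
    intro p
    by_cases hp : ∃ t ∈ MCAT C w, p <+: t
    · obtain ⟨φ, h1, h2⟩ := exists_letterMap hh hs (hV p hp)
      exact ⟨φ, h1, fun _ => h2⟩
    · exact ⟨id, strictMono_id, fun h => absurd h hp⟩
  choose φ hφm hφ using hφ
  let H : Word → Word := snocRec (fun p cur a =>
    if ∃ t ∈ MCAT C w, (p ++ [a]) <+: t then V (p ++ [a]) else cur ++ [φ p a]) [] []
  have hHs : ∀ p a, H (p ++ [a]) =
      if ∃ t ∈ MCAT C w, (p ++ [a]) <+: t then V (p ++ [a]) else H p ++ [φ p a] := by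
    intro p a
    simp only [H]
    rw [snocRec_snoc]
    simp
  have hnil : V [] = [] := by
    rw [isVal_node nil_mem_MCAT (hV [] ⟨[], nil_mem_MCAT, List.prefix_rfl⟩), hh.nil]
  have hHV : ∀ p, (∃ t ∈ MCAT C w, p <+: t) → H p = V p := by
    intro p hp
    rcases List.eq_nil_or_concat p with rfl | ⟨q, a, rfl⟩
    · rw [hnil]; rfl
    · rw [List.concat_eq_append] at hp ⊢
      rw [hHs, if_pos hp]
  have hstep : ∀ p a, (H p ++ [φ p a]) <+: H (p ++ [a]) := by
    intro p a
    rw [hHs]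
    split_ifs with hp
    · obtain ⟨t, ht, hpt⟩ := hp
      have hp' : ∃ t ∈ MCAT C w, p <+: t := ⟨t, ht, prefix_of_snoc hpt⟩
      rw [hHV p hp']
      exact hφ p hp' a _ (hV _ ⟨t, ht, hpt⟩)
    · exact List.prefix_rfl
  refine ⟨H, ⟨rfl, fun p a b hab => ⟨_, _, hφm p hab, hstep p a, hstep p b⟩⟩, fun x hx => ?_⟩
  have hx' : ∃ t ∈ MCAT C w, x <+: t := ⟨x, hx, List.prefix_rfl⟩
  rw [hHV x hx', isVal_node hx (hV x hx')]

/-- `w ≼* v` is witnessed by a tree embedding that fixes the constants. -/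
theorem Stretch.exists_emb (hwv : Stretch C w v) :
    ∃ H : Word → Word, Emb H ∧ (∀ c ∈ C, H c = c) ∧ H ∘ w = v := by
  obtain ⟨h, hh, hs⟩ := hwv
  obtain ⟨H, hH, hHh⟩ := exists_extension hh hs
  refine ⟨H, hH, fun c hc => ?_, funext fun i => ?_⟩
  · rw [hHh c (const_mem_MCAT w hc), hh.2.2.1 c hc]
  · rw [Function.comp_apply, hHh _ (entry_mem_MCAT w i), hh.2.2.2 i]

end Extension

/-! ### Padding -/

/-- The padding embedding: after the last letter of every nonempty prefix `p` of the argument,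
`g p` many zeros are inserted. -/
def pad (g : Word → ℕ) : Word → Word :=
  snocRec (fun p cur a => cur ++ (a :: List.replicate (g (p ++ [a])) 0)) [] []

section Pad

variable {g : Word → ℕ} {C : List Word}

theorem pad_snoc (p : Word) (a : ℚ) :
    pad g (p ++ [a]) = pad g p ++ (a :: List.replicate (g (p ++ [a])) 0) := by
  rw [pad, snocRec_snoc]
  simp

theorem emb_pad : Emb (pad g) := by
  refine ⟨rfl, fun p a b hab => ⟨a, b, hab, ?_, ?_⟩⟩ <;>
  · rw [pad_snoc, List.prefix_append_right_inj]
    simp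

theorem pad_eq_self (hC : ∀ c ∈ C, ∀ c' : Word, c' <+: c → c' ∈ C) (hg : ∀ c ∈ C, g c = 0) :
    ∀ c ∈ C, pad g c = c := by
  intro c
  induction c using List.reverseRecOn with
  | nil => intro _; rfl
  | append_singleton p a ih =>
    intro hc
    rw [pad_snoc, hg _ hc, ih (hC _ hc p (List.prefix_append p [a]))]
    simp

/-- The gap below `e` in the padded tree is at least `g e`. -/
theorem length_pad_add_le {d e : Word} (h : d <+: e) (hne : d ≠ e) :
    (pad g d).length + g e ≤ (pad g e).length := by
  rcases List.eq_nil_or_concat e with rfl | ⟨q, a, rfl⟩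
  · exact absurd (List.prefix_nil.1 h) hne
  · rw [List.concat_eq_append] at h hne ⊢
    have hq : d <+: q := (List.prefix_concat_iff.1 h).resolve_left hne
    have := (emb_pad (g := g).mono hq).length_le
    rw [pad_snoc]
    simp
    omega

theorem length_pad_le {M : ℕ} (x : Word) (hM : ∀ p, p <+: x → g p ≤ M) :
    (pad g x).length ≤ x.length * (1 + M) := by
  induction x using List.reverseRecOn with
  | nil => simp [pad, snocRec]
  | append_singleton p a ih =>
    have h1 := ih fun q hq => hM q (hq.trans (List.prefix_append p [a]))
    have h2 := hM _ List.prefix_rfl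
    rw [pad_snoc]
    simp only [List.length_append, List.length_cons, List.length_replicate, List.length_nil]
    nlinarith

/-- An isomorphism `h` of trees induces a stretching one between the images under two embeddings,
as soon as these grow suitably. -/
theorem stretch_of_emb {k : ℕ} {w v : Fin k → Word} {h E K : Word → Word}
    (hh : IsInducedIso C w v h) (hE : Emb E) (hEC : ∀ c ∈ C, E c = c) (hK : Emb K)
    (hKC : ∀ c ∈ C, K c = c)
    (hlen : ∀ d ∈ MCAT C w, ∀ e ∈ MCAT C w, d <+: e → d ≠ e →
      (E e).length + (K (h d)).length ≤ (K (h e)).length + (E d).length) :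
    Stretch C (E ∘ w) (K ∘ v) := by
  have hEw := hE.isInducedIso hEC w
  refine ⟨_, (hEw.symm.trans hh).trans (hK.isInducedIso hKC v), ?_⟩
  intro d hd e he hde hne
  obtain ⟨d', hd', rfl⟩ := hEw.1.surjOn hd
  obtain ⟨e', he', rfl⟩ := hEw.1.surjOn he
  simp only [Function.comp_apply, hEw.1.injOn.leftInvOn_invFunOn hd',
    hEw.1.injOn.leftInvOn_invFunOn he']
  exact hlen d' hd' e' he' (hE.prefix_iff.1 hde) (fun h => hne (congrArg E h))

end Pad

/-! ### Noncontracting pairs can be padded to stretching ones -/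

section Rank

variable {C : List Word} {k : ℕ} {w v : Fin k → Word} {h : Word → Word}

/-- `y` lies above the image of a node that `h` moves to the left. -/
def LeftMoved (C : List Word) {k : ℕ} (w : Fin k → Word) (h : Word → Word) (y : Word) : Prop :=
  ∃ e ∈ MCAT C w, Br (h e) e ∧ h e <+: y

open Classical in
/-- A rank on words, increasing along the lexicographic order outside `LeftMoved`, and decreasing
along it, with larger values, inside. The finite set `P` serves for counting. -/
noncomputable def rank (C : List Word) {k : ℕ} (w : Fin k → Word) (h : Word → Word)
    (P : Finset Word) (y : Word) : ℕ :=
  if LeftMoved C w h y then P.card + 1 + (P.filter (y < ·)).card else (P.filter (· < y)).card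

/-- If `h` moves no node down to one of its prefixes, then all prefixes of a node `e` not fixed by
`h` have smaller rank than `h e`. -/
theorem rank_lt (hh : IsInducedIso C w v h)
    (h1 : ∀ d ∈ MCAT C w, h d <+: d → h d = d) {P : Finset Word} {e x : Word}
    (he : e ∈ MCAT C w) (hne : h e ≠ e) (hx : x <+: e) (hxP : x ∈ P) :
    rank C w h P x < rank C w h P (h e) := by
  classical
  unfold rank
  by_cases hxl : LeftMoved C w h x
  · -- `e` lies above `h e₀`, hence to the left of `e₀`, hence `h e` is to the left of `h e₀`.
    obtain ⟨e₀, he₀, hbr, hpre⟩ := hxl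
    have hbr' : Br (h e) (h e₀) :=
      (hh.br_iff he he₀).2 (hbr.mono (hpre.trans hx) List.prefix_rfl)
    have hxl : LeftMoved C w h x := ⟨e₀, he₀, hbr, hpre⟩
    have hel : LeftMoved C w h (h e) :=
      ⟨e, he, hbr'.mono List.prefix_rfl (hpre.trans hx), List.prefix_rfl⟩
    have hlt : h e < x := (hbr'.mono List.prefix_rfl hpre).lt
    rw [if_pos hxl, if_pos hel]
    refine Nat.add_lt_add_left (Finset.card_lt_card ?_) _
    refine Finset.ssubset_iff_of_subset (fun t ht => ?_) |>.2 ⟨x, ?_, ?_⟩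
    · rw [Finset.mem_filter] at ht ⊢
      exact ⟨ht.1, hlt.trans ht.2⟩
    · exact Finset.mem_filter.2 ⟨hxP, hlt⟩
    · simp
  · rw [if_neg hxl]
    split_ifs with hel
    · have := Finset.card_filter_le P (· < x)
      omega
    · have hlt : x < h e := by
        refine (le_of_prefix hx).trans_lt ?_
        rcases trichotomy (h e) e with h' | h' | h' | h'
        · exact absurd (h1 e he h') hne
        · exact lt_of_prefix h' (Ne.symm hne)
        · exact absurd ⟨e, he, h', List.prefix_rfl⟩ hel
        · exact h'.lt
      refine Finset.card_lt_card ?_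
      refine Finset.ssubset_iff_of_subset (fun t ht => ?_) |>.2 ⟨x, ?_, ?_⟩
      · rw [Finset.mem_filter] at ht ⊢
        exact ⟨ht.1, ht.2.trans hlt⟩
      · exact Finset.mem_filter.2 ⟨hxP, hlt⟩
      · simp

theorem exists_length_bound (s : Set Word) (hs : s.Finite) (f : Word → ℕ) :
    ∃ L, ∀ x ∈ s, f x ≤ L := by
  obtain ⟨L, hL⟩ := (hs.image f).bddAbove
  exact ⟨L, fun x hx => hL ⟨x, hx, rfl⟩⟩

/-- A noncontracting pair becomes a stretching one after a suitable padding. -/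
theorem exists_pad_stretch (hC : ∀ c ∈ C, ∀ c' : Word, c' <+: c → c' ∈ C)
    (hwv : SameTyp C w v) (hnc : ¬ ContractingPair C w v) :
    ∃ E : Word → Word, Emb E ∧ (∀ c ∈ C, E c = c) ∧ Stretch C (E ∘ w) (E ∘ v) := by
  classical
  obtain ⟨h, hh⟩ := hwv
  have h1 : ∀ d ∈ MCAT C w, h d <+: d → h d = d := fun d hd hdd => by
    by_contra hne
    exact hnc ⟨h, hh, Or.inl ⟨d, hd, hdd, hne⟩⟩
  have h2 : ∀ d ∈ MCAT C w, ∀ e ∈ MCAT C w, d <+: e → d ≠ e → h e = e → d <+: h d → d = h d :=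
    fun d hd e he hde hne hee hdd => by
      by_contra hne'
      exact hnc ⟨h, hh, Or.inr ⟨d, hd, e, he, hde, hne, hee, hdd, hne'⟩⟩
  obtain ⟨L, hL⟩ := exists_length_bound _ (finite_MCAT C w) List.length
  let P : Finset Word := (finite_MCAT C w).toFinset.biUnion fun e => e.inits.toFinset
  have hP : ∀ e ∈ MCAT C w, ∀ x, x <+: e → x ∈ P := fun e he x hx => by
    simp only [P, Finset.mem_biUnion, Set.Finite.mem_toFinset, List.mem_toFinset, List.mem_inits]
    exact ⟨e, he, hx⟩
  let g : Word → ℕ := fun p => if p ∈ C then 0 else (2 * L + 1) ^ rank C w h P p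
  have hgC : ∀ c ∈ C, pad g c = c := pad_eq_self hC fun c hc => if_pos hc
  -- The padding at `h e` outweighs the whole padded word `e` whenever `h` moves `e`.
  have hbig : ∀ e ∈ MCAT C w, h e ≠ e → (pad g e).length ≤ g (h e) := by
    intro e he hne
    have hnC : h e ∉ C := fun hc =>
      hne (hh.1.injOn (const_mem_MCAT w hc) he (hh.2.2.1 _ hc))
    have hgh : g (h e) = (2 * L + 1) ^ rank C w h P (h e) := if_neg hnC
    obtain ⟨r, hr⟩ : ∃ r, rank C w h P (h e) = r + 1 :=
      ⟨_, (Nat.succ_pred_eq_of_pos (lt_of_le_of_lt (Nat.zero_le _)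
        (rank_lt hh h1 he hne List.prefix_rfl (hP e he e List.prefix_rfl)))).symm⟩
    have hbound : ∀ p, p <+: e → g p ≤ (2 * L + 1) ^ r := by
      intro p hp
      have hlt := rank_lt hh h1 he hne hp (hP e he p hp)
      have : g p ≤ (2 * L + 1) ^ rank C w h P p := by
        simp only [g]
        split_ifs
        · exact Nat.zero_le _
        · exact le_rfl
      exact this.trans (Nat.pow_le_pow_right (by omega) (by omega))
    have hlen := length_pad_le e hbound
    have hLe := hL e he
    have hpos : 1 ≤ (2 * L + 1) ^ r := Nat.one_le_pow _ _ (by omega)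
    rw [hgh, hr, pow_succ]
    calc (pad g e).length ≤ e.length * (1 + (2 * L + 1) ^ r) := hlen
      _ ≤ L * (2 * (2 * L + 1) ^ r) := Nat.mul_le_mul hLe (by omega)
      _ ≤ (2 * L + 1) ^ r * (2 * L + 1) := by nlinarith
  refine ⟨pad g, emb_pad, hgC, stretch_of_emb hh emb_pad hgC emb_pad hgC ?_⟩
  intro d hd e he hde hne
  by_cases hee : h e = e
  · -- Below a fixed node all nodes are fixed.
    have hdd : h d = d := by
      have hde' : h d <+: e := hee ▸ (hh.prefix_iff hd he).2 hde
      rcases List.prefix_or_prefix_of_prefix hde' hde with h' | h'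
      · exact h1 d hd h'
      · exact (h2 d hd e he hde hne hee h').symm
    rw [hee, hdd]
  · have h3 := hbig e he hee
    have h4 := length_pad_add_le (g := g) ((hh.prefix_iff hd he).2 hde)
      (fun h' => hne (hh.1.injOn hd he h'))
    omega

/-- Given `u = E w` and a tuple `v` of the same type as `w`, a uniform padding of `v` stretches
`u`. -/
theorem exists_pad_above (hC : ∀ c ∈ C, ∀ c' : Word, c' <+: c → c' ∈ C)
    (hwv : SameTyp C w v) {E : Word → Word} (hE : Emb E) (hEC : ∀ c ∈ C, E c = c) :
    ∃ K : Word → Word, Emb K ∧ (∀ c ∈ C, K c = c) ∧ Stretch C (E ∘ w) (K ∘ v) := by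
  classical
  obtain ⟨h, hh⟩ := hwv
  obtain ⟨L, hL⟩ := exists_length_bound _ (finite_MCAT C w) fun e => (E e).length
  let g : Word → ℕ := fun p => if p ∈ C then 0 else L
  have hgC : ∀ c ∈ C, pad g c = c := pad_eq_self hC fun c hc => if_pos hc
  refine ⟨pad g, emb_pad, hgC, stretch_of_emb hh hE hEC emb_pad hgC ?_⟩
  intro d hd e he hde hne
  by_cases hec : e ∈ C
  · have hdc := hC e hec d hde
    rw [hh.2.2.1 e hec, hh.2.2.1 d hdc, hgC e hec, hgC d hdc, hEC e hec, hEC d hdc]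
  · have hnC : h e ∉ C := fun hc =>
      hec (hh.1.injOn (const_mem_MCAT w hc) he (hh.2.2.1 _ hc) ▸ hc)
    have hgh : g (h e) = L := if_neg hnC
    have h3 := hL e he
    have h4 := length_pad_add_le (g := g) ((hh.prefix_iff hd he).2 hde)
      (fun h' => hne (hh.1.injOn hd he h'))
    omega

end Rank

/-! ### Well-quasi-ordering -/

/-- Equal order relations between corresponding nodes, and growing gaps, give `≼*`. -/
theorem stretch_of_nodes {C : List Word} {k : ℕ} {w v : Fin k → Word}
    (h1 : ∀ I J, (node C w I <+: node C w J ↔ node C v I <+: node C v J))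
    (h2 : ∀ I J, (lexLe (node C w I) (node C w J) ↔ lexLe (node C v I) (node C v J)))
    (h3 : ∀ I J, (node C w J).length - (node C w I).length ≤
      (node C v J).length - (node C v I).length) : Stretch C w v := by
  classical
  have hex : ∃ h : Word → Word, ∀ I, h (node C w I) = node C v I := by
    refine ⟨fun x => if hx : ∃ I, x = node C w I then node C v hx.choose else [], fun I => ?_⟩
    have hx : ∃ J, node C w I = node C w J := ⟨I, rfl⟩
    dsimp only
    rw [dif_pos hx]
    have := hx.choose_spec
    exact prefix_antisymm ((h1 _ _).1 (this ▸ List.prefix_rfl))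
      ((h1 _ _).1 (this ▸ List.prefix_rfl))
  obtain ⟨h, hh⟩ := hex
  have happ : ∀ i, h (Fin.append w C.get i) = Fin.append v C.get i := fun i => by
    rw [← node_singleton, hh, node_singleton]
  refine ⟨h, ⟨⟨?_, ?_, ?_⟩, ?_, ?_, ?_⟩, ?_⟩
  · intro x hx
    obtain ⟨I, rfl⟩ := mem_MCAT.1 hx
    exact mem_MCAT.2 ⟨I, hh I⟩
  · intro x hx y hy hxy
    obtain ⟨I, rfl⟩ := mem_MCAT.1 hx
    obtain ⟨J, rfl⟩ := mem_MCAT.1 hy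
    rw [hh, hh] at hxy
    exact prefix_antisymm ((h1 _ _).2 (hxy ▸ List.prefix_rfl))
      ((h1 _ _).2 (hxy ▸ List.prefix_rfl))
  · intro x hx
    obtain ⟨I, rfl⟩ := mem_MCAT.1 hx
    exact ⟨_, mem_MCAT.2 ⟨I, rfl⟩, hh I⟩
  · intro x hx y hy
    obtain ⟨I, rfl⟩ := mem_MCAT.1 hx
    obtain ⟨J, rfl⟩ := mem_MCAT.1 hy
    rw [hh, hh]
    exact ⟨h1 I J, h2 I J⟩
  · intro c hc
    obtain ⟨j, rfl⟩ := List.mem_iff_get.1 hc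
    simpa using happ (Fin.natAdd _ j)
  · intro i
    simpa using happ (Fin.castAdd _ i)
  · intro d hd e he hde _
    obtain ⟨I, rfl⟩ := mem_MCAT.1 hd
    obtain ⟨J, rfl⟩ := mem_MCAT.1 he
    rw [hh, hh]
    have h4 := h3 I J
    have h5 := hde.length_le
    have h6 := ((h1 I J).1 hde).length_le
    omega

/-- Every infinite sequence of tuples has a good pair for `≼*`: there are finitely many order
relations on the names of nodes, and the gap lengths are well-quasi-ordered by Dickson's
lemma. -/
theorem exists_stretch (C : List Word) {k : ℕ} (s : ℕ → Fin k → Word) :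
    ∃ i j, i < j ∧ Stretch C (s i) (s j) := by
  let N := Finset (Fin (k + C.length))
  let A := N × N → Prop × Prop
  let B := N × N → ℕ
  have hA : WellQuasiOrdered ((· = ·) : A → A → Prop) := Finite.wellQuasiOrdered _
  have hB : WellQuasiOrdered ((· ≤ ·) : B → B → Prop) := wellQuasiOrdered_le
  obtain ⟨i, j, hij, h1, h2⟩ := hA.prod hB fun i =>
    ((fun IJ : N × N => (node C (s i) IJ.1 <+: node C (s i) IJ.2,
      lexLe (node C (s i) IJ.1) (node C (s i) IJ.2))),
      (fun IJ : N × N => (node C (s i) IJ.2).length - (node C (s i) IJ.1).length))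
  refine ⟨i, j, hij, stretch_of_nodes (fun I J => ?_) (fun I J => ?_) (fun I J => h2 (I, J))⟩
  · exact iff_of_eq (congrArg Prod.fst (congrFun h1 (I, J)))
  · exact iff_of_eq (congrArg Prod.snd (congrFun h1 (I, J)))

theorem Stretch.not_contracting {C : List Word} {k : ℕ} {w v : Fin k → Word}
    (hwv : Stretch C w v) : ¬ ContractingPair C w v := by
  obtain ⟨h, hh, hs⟩ := hwv
  rintro ⟨h', hh', ⟨d, hd, hdd, hne⟩ | ⟨d, hd, e, he, hde, hne, hee, hdd, hne'⟩⟩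
  · rw [hh'.eq hh hd] at hdd hne
    exact hne (hdd.eq_of_length_le (hh.length_le hs hd))
  · rw [hh'.eq hh hd] at hdd hne'
    rw [hh'.eq hh he] at hee
    have := hs d hd e he hde hne
    rw [hee] at this
    exact hne' (hdd.eq_of_length_le (by omega))

/-! ### Runs -/

section Runs

variable {C : List Word} {Q : Type*} {n : ℕ}
  {step : (Q × (Fin n → Word)) → (Q × (Fin n → Word)) → Prop}

/-- A loop `r` whose last tuple is the image of its first one under a tree embedding `H` unfolds to
an infinite run: the `q`-th traversal is the image of `r` under `H^q`. -/
theorem exists_infRun_of_loop (hstep : TypeInvariant C step) {H : Word → Word} (hH : Emb H)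
    (hHC : ∀ c ∈ C, H c = c) {N : ℕ} (hN : 0 < N) {r : ℕ → Q × (Fin n → Word)}
    (hr : ∀ i < N, step (r i) (r (i + 1))) (hs : (r N).1 = (r 0).1)
    (hw : (r N).2 = H ∘ (r 0).2) :
    ∃ ρ : ℕ → Q × (Fin n → Word), IsInfRun step ρ ∧ ρ 0 = r 0 ∧
      ∀ q, (ρ (N * q)).1 = (r 0).1 := by
  have hit : ∀ q, Emb (H^[q]) ∧ ∀ c ∈ C, H^[q] c = c := by
    intro q
    induction q with
    | zero => exact ⟨emb_id, fun _ _ => rfl⟩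
    | succ q ih =>
      rw [Function.iterate_succ]
      exact ⟨ih.1.comp hH, fun c hc => by simp [hHC c hc, ih.2 c hc]⟩
  refine ⟨fun i => ((r (i % N)).1, H^[i / N] ∘ (r (i % N)).2), fun i => ?_, ?_, fun q => ?_⟩
  · have hmod := Nat.mod_lt i hN
    have h := (hit (i / N)).1.map_step (hit (i / N)).2 hstep (hr _ hmod)
    have hdiv := Nat.div_add_mod i N
    by_cases hlast : i % N + 1 = N
    · have heq : i + 1 = N * (i / N + 1) := by rw [mul_add]; omega
      have h1 : (i + 1) % N = 0 := by rw [heq, Nat.mul_mod_right]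
      have h2 : (i + 1) / N = i / N + 1 := by rw [heq, Nat.mul_div_cancel_left _ hN]
      rw [hlast, hs, hw, ← Function.comp_assoc, ← Function.iterate_succ] at h
      simpa only [h1, h2] using h
    · have heq : i + 1 = (i % N + 1) + N * (i / N) := by omega
      have h1 : (i + 1) % N = i % N + 1 := by
        rw [heq, Nat.add_mul_mod_self_left, Nat.mod_eq_of_lt (by omega)]
      have h2 : (i + 1) / N = i / N := by
        rw [heq, Nat.add_mul_div_left _ _ hN, Nat.div_eq_of_lt (by omega), zero_add]
      simpa only [h1, h2] using h
  · simp
  · simp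

theorem concat_run {N : ℕ} {r ρ : ℕ → Q × (Fin n → Word)}
    (hr : ∀ i < N, step (r i) (r (i + 1))) (hρ : IsInfRun step ρ) (hrρ : r N = ρ 0) :
    IsInfRun step fun i => if i < N then r i else ρ (i - N) := by
  intro i
  dsimp only
  split_ifs with h1 h2 h2
  · exact hr i h1
  · obtain rfl : i + 1 = N := by omega
    simpa [← hrρ] using hr i h1
  · omega
  · have : i + 1 - N = i - N + 1 := by omega
    rw [this]
    exact hρ _

/-- A finite run as a run indexed by the natural numbers below its length. -/
theorem IsFinRun.exists_nat {N : ℕ} {r : Fin (N + 1) → Q × (Fin n → Word)}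
    (hr : IsFinRun step r) : ∃ r' : ℕ → Q × (Fin n → Word),
      (∀ i < N, step (r' i) (r' (i + 1))) ∧ r' 0 = r 0 ∧ r' N = r (Fin.last N) := by
  refine ⟨fun i => r (Fin.ofNat (N + 1) i), fun i hi => ?_, rfl, ?_⟩
  · have := hr ⟨i, hi⟩
    convert this using 2
    · ext; simp; omega
    · ext; simp; omega
  · have : Fin.ofNat (N + 1) N = Fin.last N := by ext; simp
    simp only [this]

end Runs

/-- A type-invariant transition system has an accepting run if and only if there are a
final state `f`, tuples `w̄, v̄` of the same type, a finite run from an initial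
configuration to `(f, v̄)`, and a noncontracting loop starting in `(f, w̄)`. -/
theorem stmt10 (C : List Word) (hC : ∀ c ∈ C, ∀ c' : Word, c' <+: c → c' ∈ C)
    {Q : Type*} [Fintype Q] {n : ℕ}
    (step : (Q × (Fin n → Word)) → (Q × (Fin n → Word)) → Prop)
    (hstep : TypeInvariant C step) (I F : Set Q) :
    (∃ ρ : ℕ → Q × (Fin n → Word), IsInfRun step ρ ∧ (ρ 0).1 ∈ I ∧
        ∃ f ∈ F, ∀ k : ℕ, ∃ j ≥ k, (ρ j).1 = f) ↔
    (∃ f ∈ F, ∃ w v : Fin n → Word, SameTyp C w v ∧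
      (∃ (N₁ : ℕ) (r₁ : Fin (N₁ + 1) → Q × (Fin n → Word)),
        IsFinRun step r₁ ∧ (r₁ 0).1 ∈ I ∧ r₁ (Fin.last N₁) = (f, v)) ∧
      (∃ (N₂ : ℕ) (r₂ : Fin (N₂ + 1) → Q × (Fin n → Word)),
        0 < N₂ ∧ IsFinRun step r₂ ∧ r₂ 0 = (f, w) ∧
        (r₂ (Fin.last N₂)).1 = f ∧
        SameTyp C w (r₂ (Fin.last N₂)).2 ∧
        ¬ ContractingPair C w (r₂ (Fin.last N₂)).2)) := by
  constructor
  · rintro ⟨ρ, hρ, hI, f, hf, hinf⟩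
    choose j hj hjf using hinf
    -- A strictly increasing sequence of positions in state `f`.
    let t : ℕ → ℕ := fun i => (fun m => j (m + 1))^[i] (j 0)
    have hts : ∀ i, t (i + 1) = j (t i + 1) := fun i => by
      simp only [t, Function.iterate_succ_apply']
    have htm : StrictMono t := strictMono_nat_of_lt_succ fun i => by
      rw [hts]
      exact Nat.lt_of_succ_le (hj _)
    have htf : ∀ i, (ρ (t i)).1 = f := fun i => by
      cases i with
      | zero => exact hjf 0
      | succ i => rw [hts]; exact hjf _
    obtain ⟨a, b, hab, hst⟩ := exists_stretch C fun i => (ρ (t i)).2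
    have hlt := htm hab
    refine ⟨f, hf, (ρ (t a)).2, (ρ (t a)).2, ⟨id, isInducedIso_id⟩,
      ⟨t a, fun i => ρ i, fun i => hρ i, hI, ?_⟩,
      ⟨t b - t a, fun i => ρ (t a + i), by omega, fun i => hρ _, ?_, ?_⟩⟩
    · simp [← htf a]
    · simp [← htf a]
    · have hb : t a + (t b - t a) = t b := by omega
      simp only [Fin.val_last, hb]
      exact ⟨htf b, ⟨hst.choose, hst.choose_spec.1⟩, hst.not_contracting⟩
  · rintro ⟨f, hf, w, v, hwv, ⟨N₁, r₁, hr₁, hI, hv⟩, N₂, r₂, hN₂, hr₂, hw, hlast, hst, hnc⟩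
    obtain ⟨s₁, hs₁, hs₁0, hs₁N⟩ := hr₁.exists_nat
    obtain ⟨s₂, hs₂, hs₂0, hs₂N⟩ := hr₂.exists_nat
    obtain ⟨E, hE, hEC, hES⟩ := exists_pad_stretch hC hst hnc
    obtain ⟨K, hK, hKC, hKS⟩ := exists_pad_above hC hwv hE hEC
    obtain ⟨H, hH, hHC, hHE⟩ := hES.exists_emb
    obtain ⟨G, hG, hGC, hGE⟩ := hKS.exists_emb
    obtain ⟨ρ, hρ, hρ0, hρf⟩ := exists_infRun_of_loop hstep hH hHC hN₂
      (r := fun i => ((s₂ i).1, E ∘ (s₂ i).2)) (fun i hi => hE.map_step hEC hstep (hs₂ i hi))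
      (by simp [hs₂0, hs₂N, hw, hlast]) (by simp [hs₂0, hs₂N, hw, hHE])
    simp only [hs₂0, hw] at hρ0 hρf
    have hrun := concat_run (step := step) (N := N₁)
      (r := fun i => ((s₁ i).1, K ∘ (s₁ i).2)) (ρ := fun i => ((ρ i).1, G ∘ (ρ i).2))
      (fun i hi => hK.map_step hKC hstep (hs₁ i hi)) (fun i => hG.map_step hGC hstep (hρ i))
      (by simp [hs₁N, hv, hρ0, hGE])
    refine ⟨_, hrun, ?_, f, hf, fun m => ⟨N₁ + N₂ * m, ?_, ?_⟩⟩
    · split_ifs with h0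
      · simpa [hs₁0] using hI
      · obtain rfl : N₁ = 0 := by omega
        have hv0 : r₁ 0 = (f, v) := hv
        rw [hv0] at hI
        simpa [hρ0] using hI
    · have := Nat.le_mul_of_pos_left m hN₂
      omega
    · simp [hρf]

end CLTL
end

section
/- Let → be a type-invariant transition relation of dimension n. For every finite run r from (q, w̄) to (p, v̄) there is a finite run r' from (q, w̄') to (p, v̄') of the same type, i.e. with typ_C(w̄, v̄) = typ_C(w̄', v̄') as 2n-tuples, such that the set MCAT_C(w̄', v̄') has 2n-gaps above (the set of entries of) C. -/
/-!
The run is transported along a single map `stretch C M` of words, with `M = 2 * n`: it reads a word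
letter by letter and keeps a letter when the prefix ending there is a constant, and otherwise
repeats it `M + 1` times. How a letter is treated depends only on the prefix ending at it, so the
map preserves and reflects the prefix order and the lexicographic order and commutes with longest
common prefixes (two words that branch at a letter still branch at its first copy). As `C` is
closed under prefixes, constants are fixed. Hence `w` and `stretch C M ∘ w` have the same type for
every tuple `w` (`sameTyp_stretch`), so by type invariance the image of a run is a run. Finally, a
word outside `C` has its last letter repeated `M + 1` times, which yields the gaps
(`hasGaps_stretch`).
-/


namespace CLTL

/-- Stretching of the suffix `w` of `acc ++ w`: a letter is kept if the prefix of `acc ++ w` ending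
there is in `C`, and otherwise replaced by `M + 1` copies of itself. -/
def stretchFrom (C : List Word) (M : ℕ) : Word → Word → Word
  | _, [] => []
  | acc, a :: w =>
    List.replicate ((if acc ++ [a] ∈ C then 0 else M) + 1) a ++ stretchFrom C M (acc ++ [a]) w

/-- The map repeating `M + 1` times every letter at which the prefix read so far is not in `C`. -/
def stretch (C : List Word) (M : ℕ) (w : Word) : Word := stretchFrom C M [] w

/-! ### Recursion rules for the lexicographic order -/

theorem lexLe_nil (v : Word) : lexLe [] v := Or.inl List.nil_prefix

theorem not_lexLe_cons_nil (a : ℚ) (w : Word) : ¬ lexLe (a :: w) [] := by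
  rintro (h | ⟨p, x, y, -, -, h⟩)
  · simp at h
  · simp at h

theorem lexLe_cons_cons (a b : ℚ) (w v : Word) :
    lexLe (a :: w) (b :: v) ↔ a < b ∨ (a = b ∧ lexLe w v) := by
  constructor
  · rintro (h | ⟨p, x, y, hxy, h1, h2⟩)
    · rw [List.cons_prefix_cons] at h
      exact Or.inr ⟨h.1, Or.inl h.2⟩
    · cases p with
      | nil =>
        simp only [List.nil_append, List.cons_prefix_cons] at h1 h2
        left
        rw [← h1.1, ← h2.1]
        exact hxy
      | cons c p =>
        simp only [List.cons_append, List.cons_prefix_cons] at h1 h2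
        exact Or.inr ⟨h1.1.symm.trans h2.1, Or.inr ⟨p, x, y, hxy, h1.2, h2.2⟩⟩
  · rintro (h | ⟨rfl, h | ⟨p, x, y, hxy, h1, h2⟩⟩)
    · exact Or.inr ⟨[], a, b, h, by simp, by simp⟩
    · exact Or.inl (by simpa using h)
    · exact Or.inr ⟨a :: p, x, y, hxy, by simpa using h1, by simpa using h2⟩

theorem lexLe_append_left (u w v : Word) : lexLe (u ++ w) (u ++ v) ↔ lexLe w v := by
  induction u with
  | nil => simp
  | cons a u ih => simp [lexLe_cons_cons, ih]

theorem lcp_append_left (u w v : Word) : lcp (u ++ w) (u ++ v) = u ++ lcp w v := by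
  induction u with
  | nil => simp
  | cons a u ih => simp [lcp, ih]

/-! ### The stretching map preserves the structure of words -/

theorem stretchFrom_prefix (C : List Word) (M : ℕ) (w v acc : Word) :
    stretchFrom C M acc w <+: stretchFrom C M acc v ↔ w <+: v := by
  induction w generalizing v acc with
  | nil => simp [stretchFrom]
  | cons a w ih =>
    cases v with
    | nil => simp [stretchFrom]
    | cons b v =>
      by_cases hab : a = b
      · subst hab
        simp only [stretchFrom, List.prefix_append_right_inj, ih, List.cons_prefix_cons, true_and]
      · simp [stretchFrom, List.replicate_succ, List.cons_prefix_cons, hab]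

theorem stretchFrom_lexLe (C : List Word) (M : ℕ) (w v acc : Word) :
    lexLe (stretchFrom C M acc w) (stretchFrom C M acc v) ↔ lexLe w v := by
  induction w generalizing v acc with
  | nil => simp [stretchFrom, lexLe_nil]
  | cons a w ih =>
    cases v with
    | nil => simp [stretchFrom, List.replicate_succ, not_lexLe_cons_nil]
    | cons b v =>
      by_cases hab : a = b
      · subst hab
        simp only [stretchFrom, lexLe_append_left, ih, lexLe_cons_cons, true_and, lt_irrefl,
          false_or]
      · simp [stretchFrom, List.replicate_succ, lexLe_cons_cons, hab]

theorem stretchFrom_lcp (C : List Word) (M : ℕ) (w v acc : Word) :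
    stretchFrom C M acc (lcp w v) = lcp (stretchFrom C M acc w) (stretchFrom C M acc v) := by
  induction w generalizing v acc with
  | nil => simp [stretchFrom, lcp]
  | cons a w ih =>
    cases v with
    | nil => simp [stretchFrom, List.replicate_succ, lcp]
    | cons b v =>
      by_cases hab : a = b
      · subst hab
        simp only [stretchFrom, lcp_append_left, lcp, if_true, ih]
      · simp [stretchFrom, List.replicate_succ, lcp, hab]

theorem stretchFrom_append (C : List Word) (M : ℕ) (w v acc : Word) :
    stretchFrom C M acc (w ++ v) = stretchFrom C M acc w ++ stretchFrom C M (acc ++ w) v := by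
  induction w generalizing acc with
  | nil => simp [stretchFrom]
  | cons a w ih => simp [stretchFrom, ih]

theorem stretchFrom_eq_self (C : List Word) (hC : ∀ c ∈ C, ∀ c' : Word, c' <+: c → c' ∈ C)
    (M : ℕ) (w acc : Word) (h : acc ++ w ∈ C) : stretchFrom C M acc w = w := by
  induction w generalizing acc with
  | nil => simp [stretchFrom]
  | cons a w ih =>
    have h' : (acc ++ [a]) ++ w ∈ C := by simpa using h
    have ha : acc ++ [a] ∈ C := hC _ h' _ (List.prefix_append _ _)
    simp [stretchFrom, ih _ h', ha]

theorem stretch_eq_self (C : List Word) (hC : ∀ c ∈ C, ∀ c' : Word, c' <+: c → c' ∈ C)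
    (M : ℕ) (c : Word) (h : c ∈ C) : stretch C M c = c :=
  stretchFrom_eq_self C hC M c [] h

theorem stretch_injective (C : List Word) (M : ℕ) : Function.Injective (stretch C M) := by
  intro w v h
  have h1 : w <+: v := (stretchFrom_prefix C M w v []).1 (by
    change stretch C M w <+: stretch C M v
    rw [h])
  have h2 : v <+: w := (stretchFrom_prefix C M v w []).1 (by
    change stretch C M v <+: stretch C M w
    rw [h])
  exact h1.eq_of_length (le_antisymm h1.length_le h2.length_le)

theorem stretch_listLCP (C : List Word) (M : ℕ) (l : List Word) :
    stretch C M (listLCP l) = listLCP (l.map (stretch C M)) := by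
  induction l with
  | nil => rfl
  | cons x l ih =>
    cases l with
    | nil => rfl
    | cons y l =>
      change stretchFrom C M [] (lcp x (listLCP (y :: l))) = _
      rw [stretchFrom_lcp]
      change lcp (stretch C M x) (stretch C M (listLCP (y :: l))) = _
      rw [ih]
      rfl

/-! ### The stretching map on tuples -/

theorem MCAT_stretch (C : List Word) (hC : ∀ c ∈ C, ∀ c' : Word, c' <+: c → c' ∈ C)
    (M : ℕ) {k : ℕ} (w : Fin k → Word) :
    MCAT C (stretch C M ∘ w) = stretch C M '' MCAT C w := by
  have happ : Fin.append (stretch C M ∘ w) C.get = stretch C M ∘ Fin.append w C.get := by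
    funext i
    refine Fin.addCases (fun i => ?_) (fun i => ?_) i
    · simp
    · simp only [Fin.append_right, Function.comp_apply]
      exact (stretch_eq_self C hC M _ (List.get_mem _ _)).symm
  have hval (I : Finset (Fin (k + C.length))) :
      listLCP (I.toList.map (Fin.append (stretch C M ∘ w) C.get)) =
        stretch C M (listLCP (I.toList.map (Fin.append w C.get))) := by
    rw [stretch_listLCP, happ, List.map_map]
  ext x
  simp only [MCAT, Set.mem_insert_iff, Set.mem_ofPred_eq, Set.mem_image, hval]
  constructor
  · rintro (rfl | ⟨I, hI, rfl⟩)
    · exact ⟨[], Or.inl rfl, rfl⟩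
    · exact ⟨_, Or.inr ⟨I, hI, rfl⟩, rfl⟩
  · rintro ⟨y, rfl | ⟨I, hI, rfl⟩, rfl⟩
    · exact Or.inl rfl
    · exact Or.inr ⟨I, hI, rfl⟩

theorem sameTyp_stretch (C : List Word) (hC : ∀ c ∈ C, ∀ c' : Word, c' <+: c → c' ∈ C)
    (M : ℕ) {k : ℕ} (w : Fin k → Word) : SameTyp C w (stretch C M ∘ w) := by
  refine ⟨stretch C M, ?_, ?_, fun c hc => stretch_eq_self C hC M c hc, fun i => rfl⟩
  · rw [MCAT_stretch C hC]
    exact (stretch_injective C M).injOn.bijOn_image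
  · intro x _ y _
    exact ⟨(stretchFrom_prefix C M x y []).symm, (stretchFrom_lexLe C M x y []).symm⟩

theorem hasGaps_stretch (C : List Word) (hC : ∀ c ∈ C, ∀ c' : Word, c' <+: c → c' ∈ C)
    (M : ℕ) {k : ℕ} (w : Fin k → Word) :
    HasGaps M (MCAT C (stretch C M ∘ w)) {c | c ∈ C} := by
  rw [MCAT_stretch C hC]
  rintro _ ⟨d, -, rfl⟩ _ ⟨e, -, rfl⟩ hpre hne hB
  have he : e ∉ C := fun he => hB e he (by rw [stretch_eq_self C hC M e he])
  obtain ⟨t, rfl⟩ := (stretchFrom_prefix C M d e []).1 hpre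
  rcases List.eq_nil_or_concat t with rfl | ⟨s, a, rfl⟩
  · simp at hne
  · -- The last letter `a` ends the non-constant prefix `d ++ s ++ [a]`, hence is repeated.
    have he' : d ++ (s ++ [a]) ∉ C := by simpa using he
    simp only [stretch, List.concat_eq_append, stretchFrom_append, List.length_append,
      stretchFrom, List.nil_append, List.append_nil, List.length_replicate, List.append_assoc, he',
      if_false]
    omega

theorem stretch_append (C : List Word) (M : ℕ) {n : ℕ} (w v : Fin n → Word) :
    Fin.append (stretch C M ∘ w) (stretch C M ∘ v) = stretch C M ∘ Fin.append w v := by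
  funext i
  refine Fin.addCases (fun i => ?_) (fun i => ?_) i <;>
    simp only [Fin.append_left, Fin.append_right, Function.comp_apply]

/-- Every finite run has a finite run of the same type (with the same start and end states)
whose maximal common ancestor tree of the endpoint data values has `2n`-gaps above `C`. -/
theorem stmt11 (C : List Word) (hC : ∀ c ∈ C, ∀ c' : Word, c' <+: c → c' ∈ C)
    {Q : Type*} {n : ℕ}
    (step : (Q × (Fin n → Word)) → (Q × (Fin n → Word)) → Prop)
    (hstep : TypeInvariant C step)
    {N : ℕ} (r : Fin (N + 1) → Q × (Fin n → Word)) (hr : IsFinRun step r) :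
    ∃ (N' : ℕ) (r' : Fin (N' + 1) → Q × (Fin n → Word)),
      IsFinRun step r' ∧
      (r' 0).1 = (r 0).1 ∧ (r' (Fin.last N')).1 = (r (Fin.last N)).1 ∧
      SameTyp C (Fin.append (r 0).2 (r (Fin.last N)).2)
        (Fin.append (r' 0).2 (r' (Fin.last N')).2) ∧
      HasGaps (2 * n) (MCAT C (Fin.append (r' 0).2 (r' (Fin.last N')).2)) {c | c ∈ C} := by
  refine ⟨N, fun i => ((r i).1, stretch C (2 * n) ∘ (r i).2), ?_, rfl, rfl, ?_, ?_⟩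
  · intro i
    refine hstep _ _ _ _ _ _ (hr i) ?_
    rw [stretch_append]
    exact sameTyp_stretch C hC _ _
  · simp only [stretch_append]
    exact sameTyp_stretch C hC _ _
  · simp only [stretch_append]
    exact hasGaps_stretch C hC _ _


end CLTL
end
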